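/- Let Γ ⊂ ℂ be a quasismooth Jordan curve, and assume c₁ > 0 is a constant such that every generalized polynomial q_r of degree r with |{z ∈ Γ : q_r(z) > 1}| ≤ s < (diam Γ)/2 satisfies ‖q_r‖_{C(Γ)} ≤ exp(c₁ δ(s) r). Then there exists a constant c₂ > 0 depending only on Γ and c₁ such that for every 1 ≤ p < ∞, every generalized polynomial q_r of degree r, every 0 < s < (diam Γ)/4, and every Borel set A ⊂ Γ with |A| ≥ |Γ| − s, one has ∫_Γ (q_r)^p ds ≤ (1 + exp(c₂ δ(s) p r)) ∫_A (q_r)^p ds. -/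

import Mathlib

open MeasureTheory Metric Set Filter Bornology Complex
open scoped ENNReal NNReal Topology

noncomputable section

/-- `Γ` is a Jordan curve: the image of an injective continuous map of the unit circle. -/
def IsJordanCurve (Γ : Set ℂ) : Prop :=
  ∃ γ : ℂ → ℂ, ContinuousOn γ (Metric.sphere (0:ℂ) 1) ∧
    Set.InjOn γ (Metric.sphere (0:ℂ) 1) ∧ Γ = γ '' (Metric.sphere (0:ℂ) 1)

/-- A (closed) subarc of `Γ`: a closed connected subset. -/
def IsSubarc (Γ J : Set ℂ) : Prop :=
  J ⊆ Γ ∧ IsClosed J ∧ IsPreconnected J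

/-- `|Γ(z₁,z₂)|`: the length (1-dimensional Hausdorff measure) of the shorter subarc of `Γ`
joining `z₁` and `z₂`, described as the infimum of lengths of closed connected subsets of `Γ`
containing both points. -/
def shorterArcLength (Γ : Set ℂ) (z₁ z₂ : ℂ) : ℝ≥0∞ :=
  ⨅ (J : Set ℂ) (_ : IsSubarc Γ J ∧ z₁ ∈ J ∧ z₂ ∈ J), μH[1] J

/-- `J` is (a realization of) the shorter arc `Γ(z₁,z₂)` of `Γ` between `z₁` and `z₂`. -/
def IsShorterArc (Γ : Set ℂ) (z₁ z₂ : ℂ) (J : Set ℂ) : Prop :=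
  IsSubarc Γ J ∧ z₁ ∈ J ∧ z₂ ∈ J ∧ μH[1] J = shorterArcLength Γ z₁ z₂

/-- `Γ` is quasismooth (in the sense of Lavrentiev) with constant `Λ ≥ 1`:
`|Γ(z₁,z₂)| ≤ Λ |z₁ - z₂|`. -/
def IsQuasismooth (Γ : Set ℂ) (Λ : ℝ) : Prop :=
  1 ≤ Λ ∧ ∀ z₁ ∈ Γ, ∀ z₂ ∈ Γ,
    shorterArcLength Γ z₁ z₂ ≤ ENNReal.ofReal (Λ * dist z₁ z₂)

/-- The union of the unbounded connected components of `Γᶜ`; for a Jordan curve `Γ` this is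
the (unique) unbounded component `Ω` of the complement of `Γ`. -/
def unboundedComponent (Γ : Set ℂ) : Set ℂ :=
  {z | z ∉ Γ ∧ ¬ Bornology.IsBounded (connectedComponentIn Γᶜ z)}

/-- `d(A,B) := inf {|z-ζ| : z ∈ A, ζ ∈ B}`. -/
def setDist (A B : Set ℂ) : ℝ := sInf (Set.image2 dist A B)

/-- The exterior `𝔻*` of the closed unit disk (finite part). -/
def extDisk : Set ℂ := {w : ℂ | 1 < ‖w‖}

/-- `Φ` is the conformal (holomorphic bijective) map of `Ω` onto `𝔻* = {|w| > 1}` normalized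
by `Φ(∞) = ∞` and `Φ'(∞) := lim_{z→∞} Φ(z)/z > 0`. -/
def IsExtConformal (Ω : Set ℂ) (Φ : ℂ → ℂ) : Prop :=
  DifferentiableOn ℂ Φ Ω ∧ Set.BijOn Φ Ω extDisk ∧
    ∃ c : ℝ, 0 < c ∧
      Filter.Tendsto (fun z => Φ z / z) (Bornology.cobounded ℂ) (nhds (c : ℂ))

/-- `Φ` additionally extends to a homeomorphism of `closure Ω` onto `{|w| ≥ 1}`. -/
def IsExtConformalClosure (Ω : Set ℂ) (Φ : ℂ → ℂ) : Prop :=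
  IsExtConformal Ω Φ ∧ ContinuousOn Φ (closure Ω) ∧
    Set.BijOn Φ (closure Ω) {w : ℂ | 1 ≤ ‖w‖}

/-- The level curve `Γ_δ := {ζ ∈ Ω : |Φ(ζ)| = 1 + δ}`. -/
def levelCurve (Ω : Set ℂ) (Φ : ℂ → ℂ) (δ : ℝ) : Set ℂ :=
  {ζ ∈ Ω | ‖Φ ζ‖ = 1 + δ}

/-- `ρ_δ(z) := d({z}, Γ_δ)`. -/
def rho (Ω : Set ℂ) (Φ : ℂ → ℂ) (δ : ℝ) (z : ℂ) : ℝ :=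
  Metric.infDist z (levelCurve Ω Φ δ)

/-- `ν ∈ A∞(Γ)` with constant `lam ≥ 1`: `ν(J) ≤ lam · ν(S)` for every subarc `J ⊂ Γ` and
every Borel set `S ⊂ J` with `|J| ≤ 2|S|`. -/
def IsAInftyMeasure (Γ : Set ℂ) (ν : MeasureTheory.Measure ℂ) (lam : ℝ) : Prop :=
  1 ≤ lam ∧ ∀ J S : Set ℂ, IsSubarc Γ J → S ⊆ J → MeasurableSet S →
    μH[1] J ≤ 2 * μH[1] S → ν J ≤ ENNReal.ofReal lam * ν S

/-- `q` is a generalized polynomial of degree `r = β₁ + ⋯ + β_m`: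
`q(z) = c ∏_{j=1}^m |z - z_j|^{β_j}` with `c > 0` and `β_j > 0`. -/
def IsGenPoly (q : ℂ → ℝ) (r : ℝ) : Prop :=
  ∃ (m : ℕ) (zs : Fin m → ℂ) (β : Fin m → ℝ) (c : ℝ),
    0 < c ∧ (∀ j, 0 < β j) ∧ r = ∑ j, β j ∧
    ∀ z : ℂ, q z = c * ∏ j, ‖z - zs j‖ ^ (β j)

/-!
Powers of generalized polynomials are generalized polynomials, so `p = 1` suffices. By Chebyshev's
inequality on `A`, the superlevel set of `q` at any height `l` above `s⁻¹ ∫_A q` has measure at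
most `2 s`, hence the hypothesis applied to `q / l` bounds `q` on `Γ` by
`exp (c₁ δ(2 s) r) s⁻¹ ∫_A q`; integrate this over `Γ \ A`.

It remains to see that `δ(2 s) ≤ C δ(s)`. Green's function `log ‖Φ‖` is positive and harmonic, and
`Φ` is proper onto the exterior of the disc, so that the level curve of `δ(s)` separates the points
of `Ω` within distance `s` of `Γ` from infinity. Harnack's inequality on a disc in `Ω`, centred at a
point of the level curve of `δ(2 s)` almost closest to `Γ`, compares the levels at `2 s` and `s`.
-/

section Length

lemma edist_le_hausdorffMeasure_one {X : Type*} [MetricSpace X] [MeasurableSpace X] [BorelSpace X]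
    {K : Set X} (hK : IsPreconnected K) {x y : X} (hx : x ∈ K) (hy : y ∈ K) :
    edist x y ≤ μH[1] K := by
  have hIcc : Icc (dist x x) (dist x y) ⊆ dist x '' K :=
    (hK.image _ (by fun_prop)).Icc_subset (mem_image_of_mem _ hx) (mem_image_of_mem _ hy)
  calc edist x y = volume (Icc (dist x x) (dist x y)) := by
        rw [Real.volume_Icc, dist_self, sub_zero, edist_dist]
    _ ≤ μH[1] (dist x '' K) := by
        rw [← hausdorffMeasure_real]
        exact measure_mono hIcc
    _ ≤ μH[1] K := by
        simpa using (LipschitzWith.dist_right x).hausdorffMeasure_image_le zero_le_one K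

/-- Points `g u` and `g v` of the two arcs that `J` misses would cut the curve into two closed arcs
separating `g a` from `g b` within `J`. -/
lemma image_Ioo_subset_or_of_isPreconnected {X : Type*} [TopologicalSpace X] [T2Space X]
    {g : ℝ → X} {T : ℝ} (hg : Continuous g) (hper : Function.Periodic g T)
    (hinj : ∀ a, InjOn g (Ico a (a + T))) {J : Set X} (hJ : IsPreconnected J) (hJg : J ⊆ range g)
    {a b : ℝ} (ha : g a ∈ J) (hb : g b ∈ J) :
    g '' Ioo a b ⊆ J ∨ g '' Ioo b (a + T) ⊆ J := by
  by_contra! h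
  obtain ⟨_, ⟨u, hu, rfl⟩, huJ⟩ := not_subset.1 h.1
  obtain ⟨_, ⟨v, hv, rfl⟩, hvJ⟩ := not_subset.1 h.2
  have hclosed (c d : ℝ) : IsClosed (g '' Icc c d) := (isCompact_Icc.image hg).isClosed
  have hcover : J ⊆ g '' Icc u v ∪ g '' Icc v (u + T) := by
    rintro _ hz
    obtain ⟨t, rfl⟩ := hJg hz
    obtain ⟨t', ht', htt'⟩ := hper.exists_mem_Ico (by linarith [hu.1, hu.2, hv.1, hv.2] : 0 < T) t u
    rw [htt', ← image_union]
    exact mem_image_of_mem g ((le_total t' v).imp (⟨ht'.1, ·⟩) (⟨·, ht'.2.le⟩))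
  obtain ⟨z, hzJ, ⟨x, hx, hxz⟩, ⟨y, hy, hyz⟩⟩ :=
    isPreconnected_closed_iff.1 hJ _ _ (hclosed u v) (hclosed v (u + T)) hcover
      ⟨g b, hb, mem_image_of_mem g ⟨hu.2.le, hv.1.le⟩⟩
      ⟨g a, ha, a + T, ⟨hv.2.le, by linarith [hu.1]⟩, hper a⟩
  rcases hy.2.eq_or_lt with hyu | hyu
  · exact huJ (by rwa [← hper u, ← hyu, hyz])
  · have hxy : x = y := hinj u ⟨hx.1, by linarith [hx.2, hy.1]⟩
      ⟨hx.1.trans (hx.2.trans hy.1), hyu⟩ (hxz.trans hyz.symm)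
    have hxv : x = v := hx.2.antisymm (hxy ▸ hy.1)
    exact hvJ (by rwa [← hxv, hxz])

lemma IsJordanCurve.isCompact {Γ : Set ℂ} (hΓ : IsJordanCurve Γ) : IsCompact Γ := by
  obtain ⟨γ, hγ, -, rfl⟩ := hΓ
  exact (isCompact_sphere 0 1).image_of_continuousOn hγ

lemma IsJordanCurve.exists_periodic {Γ : Set ℂ} (hΓ : IsJordanCurve Γ) :
    ∃ g : ℝ → ℂ, Continuous g ∧ Function.Periodic g (2 * Real.pi) ∧
      (∀ a, InjOn g (Ico a (a + 2 * Real.pi))) ∧ Γ = range g := by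
  obtain ⟨γ, hγ, hinj, rfl⟩ := hΓ
  have hmem (t : ℝ) : circleMap 0 1 t ∈ sphere (0 : ℂ) 1 := circleMap_mem_sphere 0 zero_le_one t
  refine ⟨γ ∘ circleMap 0 1, hγ.comp_continuous (continuous_circleMap 0 1) hmem,
    (periodic_circleMap 0 1).comp γ, fun a x hx y hy hxy => ?_, ?_⟩
  · exact injOn_circleMap_of_abs_sub_le' one_ne_zero (by linarith) hx hy
      (hinj (hmem x) (hmem y) hxy)
  · rw [range_comp, range_circleMap, abs_one]

/-- For small `η` the shorter arc joining `g (t ± η)` is shorter than a fixed arc `K` away from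
`g t`, hence it is the arc through `g t`. -/
lemma IsQuasismooth.exists_mem_nhds_hausdorffMeasure_image_lt_top {g : ℝ → ℂ} {T Λ : ℝ}
    (hq : IsQuasismooth (range g) Λ) (hT : 0 < T) (hg : Continuous g)
    (hper : Function.Periodic g T) (hinj : ∀ a, InjOn g (Ico a (a + T))) (t : ℝ) :
    ∃ U ∈ 𝓝 t, μH[1] (g '' U) < ⊤ := by
  set K := g '' Icc (t + T / 4) (t + T / 2)
  have hK : 0 < μH[1] K := by
    refine (edist_pos.2 fun h => ?_).trans_le (edist_le_hausdorffMeasure_one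
      (isPreconnected_Icc.image g hg.continuousOn)
      (mem_image_of_mem g (left_mem_Icc.2 (by linarith)))
      (mem_image_of_mem g (right_mem_Icc.2 (by linarith))))
    linarith [hinj t ⟨by linarith, by linarith⟩ ⟨by linarith, by linarith⟩ h]
  have hlim : Tendsto (fun η : ℝ => ENNReal.ofReal (Λ * dist (g (t - η)) (g (t + η))))
      (𝓝[>] 0) (𝓝 0) := by
    have hcont : Continuous fun η : ℝ => ENNReal.ofReal (Λ * dist (g (t - η)) (g (t + η))) :=
      ENNReal.continuous_ofReal.comp (by fun_prop)
    simpa using (hcont.tendsto 0).mono_left nhdsWithin_le_nhds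
  obtain ⟨η, hηK, hη0, hηT⟩ := ((hlim.eventually_lt_const hK).and
    (Ioo_mem_nhdsGT (by positivity : 0 < T / 4))).exists
  obtain ⟨J, ⟨⟨hJg, -, hJ⟩, ha, hb⟩, hJK⟩ : ∃ J, (IsSubarc (range g) J ∧
      g (t - η) ∈ J ∧ g (t + η) ∈ J) ∧ μH[1] J < μH[1] K := by
    simpa only [shorterArcLength, iInf_lt_iff, exists_prop] using
      (hq.2 _ (mem_range_self (t - η)) _ (mem_range_self (t + η))).trans_lt hηK
  refine ⟨Ioo (t - η) (t + η), Ioo_mem_nhds (by linarith) (by linarith),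
    (measure_mono ?_).trans_lt (hJK.trans_le le_top)⟩
  refine (image_Ioo_subset_or_of_isPreconnected hg hper hinj hJ hJg ha hb).resolve_right
    fun hlong => hJK.not_ge (measure_mono (Subset.trans ?_ hlong))
  exact image_mono fun x hx => ⟨by linarith [hx.1], by linarith [hx.2]⟩

lemma IsQuasismooth.hausdorffMeasure_lt_top {Γ : Set ℂ} {Λ : ℝ} (hq : IsQuasismooth Γ Λ)
    (hΓ : IsJordanCurve Γ) : μH[1] Γ < ⊤ := by
  obtain ⟨g, hg, hper, hinj, rfl⟩ := hΓ.exists_periodic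
  rw [← hper.image_Icc Real.two_pi_pos 0]
  refine isCompact_Icc.induction_on (p := fun S => μH[1] (g '' S) < ⊤) (by simp)
    (fun s t hst ht => (measure_mono (image_mono hst)).trans_lt ht)
    (fun s t hs ht => ?_) (fun x _ => ?_)
  · rw [image_union]
    exact (measure_union_le _ _).trans_lt (ENNReal.add_lt_top.2 ⟨hs, ht⟩)
  · obtain ⟨U, hU, hU_lt⟩ :=
      hq.exists_mem_nhds_hausdorffMeasure_image_lt_top Real.two_pi_pos hg hper hinj x
    exact ⟨U, mem_nhdsWithin_of_mem_nhds hU, hU_lt⟩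

end Length

section ConformalMaps

/-- Harnack's inequality; the factor is the minimum of the Poisson kernel on the circle. -/
lemma div_mul_le_of_harmonicOnNhd_of_nonneg {u : ℂ → ℝ} {c w : ℂ} {R : ℝ}
    (hu : InnerProductSpace.HarmonicOnNhd u (closedBall c R)) (hu0 : ∀ z ∈ sphere c R, 0 ≤ u z)
    (hw : w ∈ ball c R) : (R - ‖w - c‖) / (R + ‖w - c‖) * u c ≤ u w := by
  have hR : |R| = R := abs_of_pos (pos_of_mem_ball hw)
  have hu_cont : ContinuousOn u (sphere c |R|) := fun z hz =>
    (hu z (sphere_subset_closedBall (hR ▸ hz))).1.continuousAt.continuousWithinAt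
  have hP_cont : ContinuousOn (re ∘ herglotzRieszKernel c w) (sphere c |R|) :=
    continuous_re.comp_continuousOn (continuousOn_herglotzRieszKernel_sphere hw)
  calc (R - ‖w - c‖) / (R + ‖w - c‖) * u c
      = Real.circleAverage (((R - ‖w - c‖) / (R + ‖w - c‖)) • u) c R := by
        have hu' : InnerProductSpace.HarmonicOnNhd u (closedBall c |R|) := hR.symm ▸ hu
        rw [Real.circleAverage_smul, hu'.circleAverage_eq, smul_eq_mul]
    _ ≤ Real.circleAverage ((re ∘ herglotzRieszKernel c w) • u) c R := by
        refine Real.circleAverage_mono (hu_cont.const_smul _).circleIntegrable'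
          (hP_cont.smul hu_cont).circleIntegrable' fun z hz => ?_
        rw [hR] at hz
        exact mul_le_mul_of_nonneg_right (le_re_herglotzRieszKernel hz hw) (hu0 z hz)
    _ = u w := hu.circleAverage_re_herglotzRieszKernel_smul hw

lemma nhds_le_map_nhds_of_injOn {Ω : Set ℂ} {f : ℂ → ℂ} {z₀ : ℂ} (hΩ : IsOpen Ω)
    (hf : DifferentiableOn ℂ f Ω) (hinj : InjOn f Ω) (hz₀ : z₀ ∈ Ω) :
    𝓝 (f z₀) ≤ map f (𝓝 z₀) := by
  refine (hf.analyticAt (hΩ.mem_nhds hz₀)).eventually_constant_or_nhds_le_map_nhds.resolve_left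
    fun hconst => ?_
  obtain ⟨z, ⟨hzΩ, hz⟩, hne⟩ := ((((hΩ.eventually_mem hz₀).and hconst).filter_mono
    nhdsWithin_le_nhds).and (self_mem_nhdsWithin (s := {z₀}ᶜ))).exists
  exact hne (hinj hzΩ hz₀ hz)

lemma nhdsNE_le_map_nhdsNE {X Y : Type*} [TopologicalSpace X] [TopologicalSpace Y] {f : X → Y}
    {x : X} (h : 𝓝 (f x) ≤ map f (𝓝 x)) : 𝓝[≠] (f x) ≤ map f (𝓝[≠] x) := by
  intro S hS
  refine eventually_nhdsWithin_iff.2 (h (mem_map.2 ?_))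
  filter_upwards [eventually_nhdsWithin_iff.1 hS] with y hy hne
  exact hy fun hyx => hne (congrArg f hyx)

/-- The open mapping theorem across a removable singularity. -/
lemma nhdsNE_le_map_nhdsNE_of_tendsto {g : ℂ → ℂ} {z₀ a : ℂ}
    (hg : ∀ᶠ z in 𝓝[≠] z₀, DifferentiableAt ℂ g z) (hlim : Tendsto g (𝓝[≠] z₀) (𝓝[≠] a)) :
    𝓝[≠] a ≤ map g (𝓝[≠] z₀) := by
  set F : ℂ → ℂ := Function.update g z₀ a
  have hFg : F =ᶠ[𝓝[≠] z₀] g := by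
    filter_upwards [self_mem_nhdsWithin] with z hz using Function.update_of_ne hz a g
  have hFz₀ : F z₀ = a := Function.update_self z₀ a g
  have hF_diff : ∀ᶠ z in 𝓝[≠] z₀, DifferentiableAt ℂ F z := by
    filter_upwards [hg, eventually_eventually_nhdsWithin.2 hFg, self_mem_nhdsWithin]
      with z hz hFz hne
    rw [isOpen_compl_singleton.nhdsWithin_eq hne] at hFz
    exact hz.congr_of_eventuallyEq hFz
  have hF_an : AnalyticAt ℂ F z₀ := analyticAt_of_differentiable_on_punctured_nhds_of_continuousAt
    hF_diff (continuousAt_update_same.2 (hlim.mono_right nhdsWithin_le_nhds))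
  have hF_ne : ∀ᶠ z in 𝓝[≠] z₀, F z ≠ F z₀ := by
    filter_upwards [hFg, hlim self_mem_nhdsWithin] with z hz hne
    rwa [hz, hFz₀]
  have hF_open : 𝓝 (F z₀) ≤ map F (𝓝 z₀) :=
    hF_an.eventually_constant_or_nhds_le_map_nhds.resolve_left fun hconst =>
      ((hconst.filter_mono nhdsWithin_le_nhds).and hF_ne).exists.elim fun _ hz => hz.2 hz.1
  simpa only [hFz₀, map_congr hFg] using nhdsNE_le_map_nhdsNE hF_open

/-- Inversion turns the pole at infinity into a removable singularity at `0`. -/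
lemma cobounded_le_map_cobounded {f : ℂ → ℂ} (hf : ∀ᶠ z in cobounded ℂ, DifferentiableAt ℂ f z)
    (hlim : Tendsto f (cobounded ℂ) (cobounded ℂ)) : cobounded ℂ ≤ map f (cobounded ℂ) := by
  have hinv : map Inv.inv (cobounded ℂ) = 𝓝[≠] 0 := inv_cobounded₀
  have hinv' : map Inv.inv (𝓝[≠] (0 : ℂ)) = cobounded ℂ := inv_nhdsNE_zero
  have hopen : 𝓝[≠] (0 : ℂ) ≤ map (fun ζ => (f ζ⁻¹)⁻¹) (𝓝[≠] 0) := by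
    refine nhdsNE_le_map_nhdsNE_of_tendsto ?_
      ((Tendsto.comp hinv.le hlim).comp tendsto_inv₀_nhdsNE_zero)
    filter_upwards [tendsto_inv₀_nhdsNE_zero.eventually hf, self_mem_nhdsWithin,
      (hlim.comp tendsto_inv₀_nhdsNE_zero).eventually_ne_cobounded 0] with ζ hfζ hζ hne
    exact (hfζ.comp ζ (differentiableAt_inv hζ)).inv hne
  calc cobounded ℂ = map Inv.inv (𝓝[≠] 0) := hinv'.symm
    _ ≤ map Inv.inv (map (fun ζ => (f ζ⁻¹)⁻¹) (𝓝[≠] 0)) := map_mono hopen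
    _ = map f (map Inv.inv (𝓝[≠] 0)) := by
        simp only [map_map, Function.comp_def, inv_inv]
    _ = map f (cobounded ℂ) := by rw [hinv']

lemma tendsto_of_le_map_of_eventually_leftInverse {X Y : Type*} {f : X → Y} {g : Y → X}
    {l : Filter X} {l' : Filter Y} (hle : l' ≤ map f l) (hgf : ∀ᶠ x in l, g (f x) = x) :
    Tendsto g l' l :=
  (tendsto_map'_iff.2 (tendsto_id.congr' (hgf.mono fun _ h => h.symm))).mono_left hle

lemma isClosed_image_of_tendsto_cocompact {X Y : Type*} [TopologicalSpace X] [TopologicalSpace Y]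
    [T2Space Y] [CompactlyCoherentSpace Y] {g : X → Y} {S : Set X} (hS : IsClosed S)
    (hg : ContinuousOn g S) (hlim : Tendsto g (cocompact X ⊓ 𝓟 S) (cocompact Y)) :
    IsClosed (g '' S) := by
  have hproper : IsProperMap (S.domRestrict g) := isProperMap_iff_tendsto_cocompact.2
    ⟨hg.domRestrict, hlim.comp (tendsto_inf.2 ⟨hS.isClosedEmbedding_subtypeVal.tendsto_cocompact,
      tendsto_principal.2 (.of_forall Subtype.prop)⟩)⟩
  exact range_domRestrict g S ▸ hproper.isClosed_range

namespace IsExtConformal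

variable {Ω : Set ℂ} {Φ : ℂ → ℂ}

lemma tendsto_cobounded (hΦ : IsExtConformal Ω Φ) :
    Tendsto Φ (cobounded ℂ) (cobounded ℂ) := by
  obtain ⟨-, -, c, hc, hlim⟩ := hΦ
  have hprod : Tendsto (fun z => ‖Φ z / z‖ * ‖z‖) (cobounded ℂ) atTop :=
    hlim.norm.pos_mul_atTop (by simpa using hc.ne') tendsto_norm_cobounded_atTop
  refine tendsto_norm_atTop_iff_cobounded.1 (hprod.congr' ?_)
  filter_upwards [eventually_ne_cobounded 0] with z hz
  rw [← norm_mul, div_mul_cancel₀ _ hz]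

lemma isClosed_le_norm (hΦ : IsExtConformal Ω Φ) (hΩ : IsOpen Ω) (hΩ' : Ω ∈ cobounded ℂ)
    {a : ℝ} (ha : 1 < a) : IsClosed {z ∈ Ω | a ≤ ‖Φ z‖} := by
  obtain ⟨hd, hbij, -⟩ := id hΦ
  set Ψ := Function.invFunOn Φ Ω
  have hleft : LeftInvOn Ψ Φ Ω := hbij.invOn_invFunOn.1
  have hΨ_cont : ContinuousOn Ψ extDisk := by
    intro w hw
    obtain ⟨z, hz, rfl⟩ := hbij.surjOn hw
    refine ContinuousAt.continuousWithinAt ?_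
    rw [ContinuousAt, hleft hz]
    exact tendsto_of_le_map_of_eventually_leftInverse
      (nhds_le_map_nhds_of_injOn hΩ hd hbij.injOn hz) (mem_of_superset (hΩ.mem_nhds hz) hleft)
  have hΨ_lim : Tendsto Ψ (cobounded ℂ) (cobounded ℂ) :=
    tendsto_of_le_map_of_eventually_leftInverse
      (cobounded_le_map_cobounded
        (mem_of_superset hΩ' fun z hz => hd.differentiableAt (hΩ.mem_nhds hz))
        hΦ.tendsto_cobounded)
      (mem_of_superset hΩ' hleft)
  have himage : {z ∈ Ω | a ≤ ‖Φ z‖} = Ψ '' {w | a ≤ ‖w‖} := by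
    ext z
    constructor
    · rintro ⟨hz, haz⟩
      exact ⟨Φ z, haz, hleft hz⟩
    · rintro ⟨w, haw, rfl⟩
      obtain ⟨z, hz, rfl⟩ := hbij.surjOn (show w ∈ extDisk from ha.trans_le haw)
      rw [hleft hz]
      exact ⟨hz, haw⟩
  rw [himage]
  rw [cobounded_eq_cocompact] at hΨ_lim
  exact isClosed_image_of_tendsto_cocompact (isClosed_le continuous_const continuous_norm)
    (hΨ_cont.mono fun w hw => ha.trans_le hw) (hΨ_lim.mono_left inf_le_left)

end IsExtConformal

end ConformalMaps

section LevelCurves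

lemma setDist_le_dist {A B : Set ℂ} {x y : ℂ} (hx : x ∈ A) (hy : y ∈ B) :
    setDist A B ≤ dist x y :=
  csInf_le ⟨0, forall_mem_image2.2 fun _ _ _ _ => dist_nonneg⟩ (mem_image2_of_mem hx hy)

/-- `setDist A B` is `0` when `A` or `B` is empty. -/
lemma exists_dist_lt_of_setDist_lt {A B : Set ℂ} {t : ℝ} (hpos : 0 < setDist A B)
    (ht : setDist A B < t) : ∃ x ∈ A, ∃ y ∈ B, dist x y < t := by
  have hne : (image2 dist A B).Nonempty := by
    by_contra! hempty
    simp [setDist, hempty] at hpos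
  obtain ⟨_, ⟨x, hx, y, hy, rfl⟩, hlt⟩ := exists_lt_of_csInf_lt hne ht
  exact ⟨x, hx, y, hy, hlt⟩

lemma isOpen_unboundedComponent {Γ : Set ℂ} (hΓ : IsClosed Γ) :
    IsOpen (unboundedComponent Γ) := by
  refine isOpen_iff_mem_nhds.2 fun z ⟨hz, hunbdd⟩ => ?_
  filter_upwards [hΓ.isOpen_compl.connectedComponentIn.mem_nhds (mem_connectedComponentIn hz)]
    with w hw
  exact ⟨connectedComponentIn_subset _ _ hw, by rwa [← connectedComponentIn_eq hw]⟩

lemma unboundedComponent_mem_cobounded {Γ : Set ℂ} (hΓ : IsBounded Γ) :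
    unboundedComponent Γ ∈ cobounded ℂ := by
  obtain ⟨R, hR, hΓR⟩ := hΓ.subset_closedBall_lt 0 0
  have hcompl {w : ℂ} (hw : R < ‖w‖) : w ∈ Γᶜ := fun hwΓ =>
    hw.not_ge (mem_closedBall_zero_iff.1 (hΓR hwΓ))
  filter_upwards [tendsto_norm_cobounded_atTop.eventually_gt_atTop R] with z hz
  have hz0 : 0 < ‖z‖ := hR.trans hz
  have hnorm {t : ℝ} (ht : 1 ≤ t) : ‖t • z‖ = t * ‖z‖ :=
    norm_smul_of_nonneg (zero_le_one.trans ht) z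
  have hray : (· • z) '' Ici (1 : ℝ) ⊆ connectedComponentIn Γᶜ z := by
    refine (isPreconnected_Ici.image _ (by fun_prop)).subset_connectedComponentIn
      ⟨1, self_mem_Ici, one_smul ℝ z⟩ ?_
    rintro _ ⟨t, ht, rfl⟩
    exact hcompl (hz.trans_le (hnorm ht ▸ le_mul_of_one_le_left hz0.le ht))
  refine ⟨hcompl hz, fun hbdd => ?_⟩
  obtain ⟨C, hC⟩ := (hbdd.subset hray).exists_norm_le
  obtain ⟨t, ht, htC⟩ := ((eventually_ge_atTop (1 : ℝ)).and
    (eventually_gt_atTop (C / ‖z‖))).exists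
  rw [div_lt_iff₀ hz0, ← hnorm ht] at htC
  exact htC.not_ge (hC _ (mem_image_of_mem _ ht))

lemma ball_subset_unboundedComponent {Γ : Set ℂ} {z : ℂ} {R : ℝ}
    (hz : z ∈ unboundedComponent Γ) (hR : ∀ ζ ∈ Γ, R ≤ dist ζ z) :
    ball z R ⊆ unboundedComponent Γ := by
  intro x hx
  have hsub : ball z R ⊆ Γᶜ := fun y hy hyΓ => (mem_ball.1 hy).not_ge (hR y hyΓ)
  have hxz : x ∈ connectedComponentIn Γᶜ z :=
    (convex_ball z R).isPreconnected.subset_connectedComponentIn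
      (mem_ball_self (pos_of_mem_ball hx)) hsub hx
  exact ⟨hsub hx, connectedComponentIn_eq hxz ▸ hz.2⟩

lemma IsExtConformal.norm_lt_of_isPreconnected {Ω : Set ℂ} {Φ : ℂ → ℂ}
    (hΦ : IsExtConformal Ω Φ) (hΩ : IsOpen Ω) (hΩ' : Ω ∈ cobounded ℂ) {δ : ℝ} (hδ : 0 < δ)
    {S : Set ℂ} (hS : IsPreconnected S) (hdisj : Disjoint S (levelCurve Ω Φ δ))
    (hSΩ : (S \ Ω).Nonempty) {z : ℂ} (hz : z ∈ S) (hzΩ : z ∈ Ω) : ‖Φ z‖ < 1 + δ := by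
  have hinside : IsOpen {z ∈ Ω | 1 + δ ≤ ‖Φ z‖}ᶜ :=
    (hΦ.isClosed_le_norm hΩ hΩ' (by linarith)).isOpen_compl
  have houtside : IsOpen (Ω ∩ (fun z => ‖Φ z‖) ⁻¹' Ioi (1 + δ)) :=
    hΦ.1.continuousOn.norm.isOpen_inter_preimage hΩ isOpen_Ioi
  have hcover : S ⊆ {z ∈ Ω | 1 + δ ≤ ‖Φ z‖}ᶜ ∪ Ω ∩ (fun z => ‖Φ z‖) ⁻¹' Ioi (1 + δ) := by
    intro x hx
    by_contra! hx'
    simp only [mem_union, not_or, mem_compl_iff, not_not] at hx'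
    obtain ⟨⟨hxΩ, hle⟩, hge⟩ := hx'
    exact disjoint_left.1 hdisj hx ⟨hxΩ, hle.antisymm' (not_lt.1 fun hlt => hge ⟨hxΩ, hlt⟩)⟩
  obtain ⟨x, hxS, hxΩ⟩ := hSΩ
  have hS_inside := hS.subset_left_of_subset_union hinside houtside
    (disjoint_left.2 fun x hx hx' => hx ⟨hx'.1, (mem_Ioi.1 hx'.2).le⟩) hcover
    ⟨x, hxS, fun hx => hxΩ hx.1⟩
  exact not_le.1 fun hle => hS_inside hz ⟨hzΩ, hle⟩

variable {Γ : Set ℂ} {Φ : ℂ → ℂ}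

lemma norm_lt_of_dist_lt_setDist (hΓ : IsCompact Γ)
    (hΦ : IsExtConformal (unboundedComponent Γ) Φ) {δ : ℝ} (hδ : 0 < δ) {z ζ : ℂ}
    (hz : z ∈ unboundedComponent Γ) (hζ : ζ ∈ Γ)
    (hdist : dist z ζ < setDist Γ (levelCurve (unboundedComponent Γ) Φ δ)) :
    ‖Φ z‖ < 1 + δ := by
  refine hΦ.norm_lt_of_isPreconnected (isOpen_unboundedComponent hΓ.isClosed)
    (unboundedComponent_mem_cobounded hΓ.isBounded) hδ
    (convex_ball ζ (setDist Γ (levelCurve (unboundedComponent Γ) Φ δ))).isPreconnected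
    (disjoint_left.2 fun x hx hx' => ?_) ⟨ζ, mem_ball_self (dist_nonneg.trans_lt hdist),
      fun hζ' => hζ'.1 hζ⟩ hdist hz
  exact (mem_ball'.1 hx).not_ge (setDist_le_dist hζ hx')

lemma lt_of_setDist_levelCurve_lt (hΓ : IsCompact Γ)
    (hΦ : IsExtConformal (unboundedComponent Γ) Φ) {δ δ' : ℝ} (hδ' : 0 < δ')
    (hpos : 0 < setDist Γ (levelCurve (unboundedComponent Γ) Φ δ))
    (hlt : setDist Γ (levelCurve (unboundedComponent Γ) Φ δ) <
      setDist Γ (levelCurve (unboundedComponent Γ) Φ δ')) : δ < δ' := by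
  obtain ⟨ζ, hζ, z, hz, hdist⟩ := exists_dist_lt_of_setDist_lt hpos hlt
  have hΦz := norm_lt_of_dist_lt_setDist hΓ hΦ hδ' hz.1 hζ (by rwa [dist_comm])
  linarith [hz.2]

lemma IsExtConformal.mul_log_norm_le_log_norm {Ω : Set ℂ} (hΦ : IsExtConformal Ω Φ)
    (hΩ : IsOpen Ω) {z w : ℂ} {R : ℝ} (hball : closedBall z R ⊆ Ω) (hw : w ∈ ball z R) :
    (R - ‖w - z‖) / (R + ‖w - z‖) * Real.log ‖Φ z‖ ≤ Real.log ‖Φ w‖ := by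
  have hΦ_gt {x : ℂ} (hx : x ∈ Ω) : 1 < ‖Φ x‖ := hΦ.2.1.mapsTo hx
  refine div_mul_le_of_harmonicOnNhd_of_nonneg (u := fun x => Real.log ‖Φ x‖)
    (fun x hx => ?_) (fun x hx => ?_) hw
  · exact (hΦ.1.analyticAt (hΩ.mem_nhds (hball hx))).harmonicAt_log_norm
      (norm_pos_iff.1 (one_pos.trans (hΦ_gt (hball hx))))
  · exact Real.log_nonneg (hΦ_gt (hball (sphere_subset_closedBall hx))).le

lemma log_one_add_le_of_setDist_eq_two_mul (hΓ : IsCompact Γ)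
    (hΦ : IsExtConformal (unboundedComponent Γ) Φ) {δ₁ δ₂ s : ℝ} (hδ₁ : 0 < δ₁) (hs : 0 < s)
    (h₁ : setDist Γ (levelCurve (unboundedComponent Γ) Φ δ₁) = s)
    (h₂ : setDist Γ (levelCurve (unboundedComponent Γ) Φ δ₂) = 2 * s) :
    Real.log (1 + δ₂) ≤ 13 * Real.log (1 + δ₁) := by
  have hΩ := isOpen_unboundedComponent hΓ.isClosed
  obtain ⟨ζ, hζ, z, hz, hζz⟩ := exists_dist_lt_of_setDist_lt (h₂.symm ▸ by positivity)
    (h₂.trans_lt (by linarith : 2 * s < 5 / 2 * s))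
  have hball : closedBall z (7 / 4 * s) ⊆ unboundedComponent Γ :=
    (closedBall_subset_ball (by linarith : 7 / 4 * s < 2 * s)).trans
      (ball_subset_unboundedComponent hz.1 fun ξ hξ => h₂ ▸ setDist_le_dist hξ hz)
  set w : ℂ := AffineMap.lineMap ζ z (2 / 5 : ℝ)
  have hwζ : dist w ζ < s := by
    rw [dist_lineMap_left, Real.norm_of_nonneg (by norm_num)]
    linarith
  have hwz : ‖w - z‖ < 3 / 2 * s := by
    rw [← dist_eq_norm, dist_lineMap_right, Real.norm_of_nonneg (by norm_num)]
    linarith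
  have hw : w ∈ ball z (7 / 4 * s) := mem_ball_iff_norm.2 (by linarith)
  have hwΩ := hball (ball_subset_closedBall hw)
  have hδ₂ : 0 < Real.log (1 + δ₂) := hz.2 ▸ Real.log_pos (hΦ.2.1.mapsTo hz.1)
  have hfactor : 1 / 13 ≤ (7 / 4 * s - ‖w - z‖) / (7 / 4 * s + ‖w - z‖) := by
    rw [div_le_div_iff₀ (by norm_num) (by positivity)]
    linarith
  calc Real.log (1 + δ₂) = 13 * (1 / 13 * Real.log (1 + δ₂)) := by ring
    _ ≤ 13 * ((7 / 4 * s - ‖w - z‖) / (7 / 4 * s + ‖w - z‖) * Real.log ‖Φ z‖) := by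
      rw [hz.2]
      gcongr
    _ ≤ 13 * Real.log ‖Φ w‖ := by
      gcongr
      exact hΦ.mul_log_norm_le_log_norm hΩ hball hw
    _ ≤ 13 * Real.log (1 + δ₁) := by
      gcongr
      · exact one_pos.trans (hΦ.2.1.mapsTo hwΩ)
      · exact (norm_lt_of_dist_lt_setDist hΓ hΦ hδ₁ hwΩ hζ (by rwa [h₁])).le

lemma le_mul_of_log_one_add_le {x y C : ℝ} (hx : 0 ≤ x) (hy : 0 ≤ y) (hC : 0 ≤ C)
    (h : Real.log (1 + y) ≤ C * Real.log (1 + x)) : y ≤ C * (1 + y) * x := by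
  have hlower : y / (1 + y) ≤ Real.log (1 + y) := by
    have hy' : y / (1 + y) = 1 - (1 + y)⁻¹ := by
      field_simp
      ring
    exact hy' ▸ Real.one_sub_inv_le_log_of_pos (by positivity)
  have hupper : Real.log (1 + x) ≤ x := by
    linarith [Real.log_le_sub_one_of_pos (by positivity : 0 < 1 + x)]
  rw [mul_right_comm, ← div_le_iff₀ (by positivity)]
  exact hlower.trans (h.trans (by gcongr))

lemma exists_apply_two_mul_le_mul (hΓ : IsCompact Γ)
    (hΦ : IsExtConformal (unboundedComponent Γ) Φ) {δ : ℝ → ℝ} {d : ℝ}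
    (hδ : ∀ s, 0 < s → s < d →
      0 < δ s ∧ setDist Γ (levelCurve (unboundedComponent Γ) Φ (δ s)) = s) :
    ∃ C > 0, ∀ s, 0 < s → s < d / 4 → δ (2 * s) ≤ C * δ s := by
  refine ⟨13 * (1 + |δ (d / 2)|), by positivity, fun s hs hsd => ?_⟩
  obtain ⟨hδ₁, h₁⟩ := hδ s hs (by linarith)
  obtain ⟨hδ₂, h₂⟩ := hδ (2 * s) (by linarith) (by linarith)
  obtain ⟨hδ₃, h₃⟩ := hδ (d / 2) (by linarith) (by linarith)
  have hmono : δ (2 * s) ≤ |δ (d / 2)| := (lt_of_setDist_levelCurve_lt hΓ hΦ hδ₃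
    (by rw [h₂]; linarith) (by rw [h₂, h₃]; linarith)).le.trans (le_abs_self _)
  calc δ (2 * s) ≤ 13 * (1 + δ (2 * s)) * δ s := le_mul_of_log_one_add_le hδ₁.le hδ₂.le
        (by norm_num) (log_one_add_le_of_setDist_eq_two_mul hΓ hΦ hδ₁ hs h₁ h₂)
    _ ≤ 13 * (1 + |δ (d / 2)|) * δ s := by gcongr

end LevelCurves

section Superlevel

variable {X : Type*} [MeasurableSpace X] {μ : Measure X} {Γ A : Set X} {f : X → ℝ} {C s : ℝ}

lemma measure_superlevel_le {l : ℝ} (hA : MeasurableSet A) (hf : IntegrableOn f A μ)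
    (hf0 : ∀ z, 0 ≤ f z) (hs : 0 < s) (hΓA : μ (Γ \ A) ≤ ENNReal.ofReal s)
    (hl : (∫ z in A, f z ∂μ) / s < l) : μ {z ∈ Γ | l < f z} ≤ ENNReal.ofReal (2 * s) := by
  have hl0 : 0 < l := (div_nonneg (integral_nonneg hf0) hs.le).trans_lt hl
  have hchebyshev : (μ.restrict A).real {z | l ≤ f z} ≤ s := by
    refine le_of_mul_le_mul_left ?_ hl0
    exact (mul_meas_ge_le_integral_of_nonneg (.of_forall hf0) hf l).trans
      ((div_lt_iff₀ hs).1 hl).le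
  have hA_le : μ ({z | l ≤ f z} ∩ A) ≤ ENNReal.ofReal s := by
    rw [← Measure.restrict_apply' hA, ← ofReal_measureReal (hf.measure_ge_lt_top hl0).ne]
    exact ENNReal.ofReal_le_ofReal hchebyshev
  calc μ {z ∈ Γ | l < f z} ≤ μ ({z | l ≤ f z} ∩ A ∪ Γ \ A) := measure_mono fun z hz =>
        (em (z ∈ A)).imp (⟨hz.2.le, ·⟩) (⟨hz.1, ·⟩)
    _ ≤ ENNReal.ofReal s + ENNReal.ofReal s :=
        (measure_union_le _ _).trans (add_le_add hA_le hΓA)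
    _ = ENNReal.ofReal (2 * s) := by rw [← ENNReal.ofReal_add hs.le hs.le, two_mul]

lemma setIntegral_le_one_add_mul_of_superlevel (hΓ : IntegrableOn f Γ μ) (hf0 : ∀ z, 0 ≤ f z)
    (hA : MeasurableSet A) (hAΓ : A ⊆ Γ) (hs : 0 < s) (hΓA : μ (Γ \ A) ≤ ENNReal.ofReal s)
    (hC : 0 ≤ C)
    (hsup : ∀ l > 0, μ {z ∈ Γ | l < f z} ≤ ENNReal.ofReal (2 * s) → ∀ z ∈ Γ, f z ≤ C * l) :
    ∫ z in Γ, f z ∂μ ≤ (1 + C) * ∫ z in A, f z ∂μ := by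
  set I := ∫ z in A, f z ∂μ
  have hI0 : 0 ≤ I / s := div_nonneg (integral_nonneg hf0) hs.le
  have hbound : ∀ z ∈ Γ, f z ≤ C * (I / s) := fun z hz => by
    have hlim : Tendsto (fun l => C * l) (𝓝[>] (I / s)) (𝓝 (C * (I / s))) :=
      ((continuous_const_mul C).tendsto _).mono_left nhdsWithin_le_nhds
    refine ge_of_tendsto hlim (eventually_mem_nhdsWithin.mono fun l hl => ?_)
    exact hsup l (hI0.trans_lt hl)
      (measure_superlevel_le hA (hΓ.mono_set hAΓ) hf0 hs hΓA hl) z hz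
  have hdiff : ∫ z in Γ \ A, f z ∂μ ≤ C * I :=
    calc ∫ z in Γ \ A, f z ∂μ ≤ C * (I / s) * μ.real (Γ \ A) :=
          (le_abs_self _).trans (norm_setIntegral_le_of_norm_le_const
            (hΓA.trans_lt ENNReal.ofReal_lt_top)
            fun z hz => (Real.norm_of_nonneg (hf0 z)).trans_le (hbound z hz.1))
      _ ≤ C * (I / s) * s := by
          gcongr
          exact ENNReal.toReal_le_of_le_ofReal hs.le hΓA
      _ = C * I := by field_simp
  rw [setIntegral_sdiff hA hΓ hAΓ] at hdiff
  linarith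

end Superlevel

namespace IsGenPoly

variable {q : ℂ → ℝ} {r : ℝ}

lemma continuous (hq : IsGenPoly q r) : Continuous q := by
  obtain ⟨m, zs, β, c, -, hβ, -, hq⟩ := hq
  rw [funext hq]
  exact continuous_const.mul (continuous_finsetProd _ fun j _ =>
    (continuous_id.sub continuous_const).norm.rpow_const fun _ => Or.inr (hβ j).le)

lemma nonneg (hq : IsGenPoly q r) (z : ℂ) : 0 ≤ q z := by
  obtain ⟨m, zs, β, c, hc, -, -, hq⟩ := hq
  rw [hq]
  positivity

lemma degree_nonneg (hq : IsGenPoly q r) : 0 ≤ r := by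
  obtain ⟨m, zs, β, c, -, hβ, rfl, -⟩ := hq
  exact Finset.sum_nonneg fun j _ => (hβ j).le

lemma const_mul (hq : IsGenPoly q r) {a : ℝ} (ha : 0 < a) : IsGenPoly (fun z => a * q z) r := by
  obtain ⟨m, zs, β, c, hc, hβ, hr, hq⟩ := hq
  exact ⟨m, zs, β, a * c, mul_pos ha hc, hβ, hr, fun z => by
    simp only [hq, mul_assoc]⟩

lemma rpow (hq : IsGenPoly q r) {p : ℝ} (hp : 0 < p) :
    IsGenPoly (fun z => q z ^ p) (p * r) := by
  obtain ⟨m, zs, β, c, hc, hβ, rfl, hq⟩ := hq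
  refine ⟨m, zs, fun j => p * β j, c ^ p, Real.rpow_pos_of_pos hc p, fun j => mul_pos hp (hβ j),
    Finset.mul_sum _ _ _, fun z => ?_⟩
  have hprod : (∏ j, ‖z - zs j‖ ^ β j) ^ p = ∏ j, ‖z - zs j‖ ^ (p * β j) := by
    rw [← Real.finsetProd_rpow _ _ fun j _ => by positivity]
    simp only [← Real.rpow_mul (norm_nonneg _), mul_comm p]
  beta_reduce
  rw [hq, Real.mul_rpow hc.le (by positivity), hprod]

/-- Rescaling to height `1`: the generalized polynomials of a fixed degree form a cone. -/
lemma le_mul_of_measure_superlevel_le {μ : Measure ℂ} {Γ : Set ℂ} {t : ℝ≥0∞} {M : ℝ}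
    (hM : ∀ q : ℂ → ℝ, IsGenPoly q r → μ {z ∈ Γ | 1 < q z} ≤ t → ∀ z ∈ Γ, q z ≤ M)
    (hq : IsGenPoly q r) {l : ℝ} (hl : 0 < l) (hμ : μ {z ∈ Γ | l < q z} ≤ t) {z : ℂ}
    (hz : z ∈ Γ) : q z ≤ M * l := by
  have hscale : {z ∈ Γ | 1 < l⁻¹ * q z} = {z ∈ Γ | l < q z} := by
    simp only [inv_mul_eq_div, one_lt_div hl]
  rw [← inv_mul_le_iff₀' hl]
  exact hM _ (hq.const_mul (inv_pos.2 hl)) (hscale ▸ hμ) z hz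

end IsGenPoly

theorem genpoly_remez_Lp_general {Γ : Set ℂ} (hΓ : IsCompact Γ) {μ : Measure ℂ}
    (hμ : μ Γ ≠ ⊤) {Φ : ℂ → ℂ} (hΦ : IsExtConformal (unboundedComponent Γ) Φ) {δfun : ℝ → ℝ}
    (hδfun : ∀ s : ℝ, 0 < s → s < Metric.diam Γ →
      0 < δfun s ∧ setDist Γ (levelCurve (unboundedComponent Γ) Φ (δfun s)) = s)
    {c₁ : ℝ} (hc₁ : 0 < c₁)
    (hremez : ∀ (q : ℂ → ℝ) (r s : ℝ), IsGenPoly q r → 0 < s →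
      μ {z ∈ Γ | 1 < q z} ≤ ENNReal.ofReal s → s < Metric.diam Γ / 2 →
      ∀ z ∈ Γ, q z ≤ Real.exp (c₁ * δfun s * r)) :
    ∃ c₂ > (0 : ℝ), ∀ (p : ℝ) (q : ℂ → ℝ) (r s : ℝ) (A : Set ℂ),
      0 < p → IsGenPoly q r → 0 < s → s < Metric.diam Γ / 4 →
      MeasurableSet A → A ⊆ Γ → μ Γ ≤ μ A + ENNReal.ofReal s →
      ∫ z in Γ, q z ^ p ∂μ ≤
        (1 + Real.exp (c₂ * δfun s * p * r)) * ∫ z in A, q z ^ p ∂μ := by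
  obtain ⟨C, hC, hdouble⟩ := exists_apply_two_mul_le_mul hΓ hΦ hδfun
  refine ⟨c₁ * C, mul_pos hc₁ hC, fun p q r s A hp hq hs hsd hA hAΓ hμA => ?_⟩
  have hqp := hq.rpow hp
  have hint : IntegrableOn (fun z => q z ^ p) Γ μ :=
    hqp.continuous.continuousOn.integrableOn_of_subset_isCompact hΓ hΓ.measurableSet subset_rfl hμ
  have hdiff : μ (Γ \ A) ≤ ENNReal.ofReal s := by
    rw [measure_sdiff hAΓ hA.nullMeasurableSet (measure_ne_top_of_subset hAΓ hμ)]
    exact tsub_le_iff_left.2 hμA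
  have hexp : Real.exp (c₁ * δfun (2 * s) * (p * r)) ≤ Real.exp (c₁ * C * δfun s * p * r) := by
    have hr := hq.degree_nonneg
    rw [mul_assoc c₁ C, mul_assoc (c₁ * _) p r]
    gcongr
    exact hdouble s hs hsd
  calc ∫ z in Γ, q z ^ p ∂μ
      ≤ (1 + Real.exp (c₁ * δfun (2 * s) * (p * r))) * ∫ z in A, q z ^ p ∂μ :=
        setIntegral_le_one_add_mul_of_superlevel hint hqp.nonneg hA hAΓ hs hdiff
          (Real.exp_pos _).le fun l hl hμl z hz => IsGenPoly.le_mul_of_measure_superlevel_le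
            (fun q hq hμq => hremez q _ (2 * s) hq (by linarith) hμq (by linarith)) hqp hl hμl hz
    _ ≤ (1 + Real.exp (c₁ * C * δfun s * p * r)) * ∫ z in A, q z ^ p ∂μ := by
        gcongr
        exact integral_nonneg hqp.nonneg

/-- (4.3): assume `c₁ > 0` is such that every generalized polynomial `q_r`
of degree `r` with `|{z ∈ Γ : q_r(z) > 1}| ≤ s < (diam Γ)/2` satisfies
`‖q_r‖_{C(Γ)} ≤ exp(c₁ δ(s) r)`. Then there is `c₂ = c₂(Γ,c₁) > 0` such that for every
`1 ≤ p < ∞`, every generalized polynomial `q_r` of degree `r`, every `0 < s < (diam Γ)/4`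
and every Borel `A ⊆ Γ` with `|A| ≥ |Γ| - s`,
`∫_Γ q_r^p ds ≤ (1 + exp(c₂ δ(s) p r)) ∫_A q_r^p ds`. -/
theorem genpoly_remez_Lp
    (Γ : Set ℂ) (Λ : ℝ) (hΓJ : IsJordanCurve Γ) (hΓq : IsQuasismooth Γ Λ)
    (Φ : ℂ → ℂ) (hΦ : IsExtConformal (unboundedComponent Γ) Φ)
    (δfun : ℝ → ℝ)
    (hδfun : ∀ s : ℝ, 0 < s → s < Metric.diam Γ →
      0 < δfun s ∧ setDist Γ (levelCurve (unboundedComponent Γ) Φ (δfun s)) = s)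
    (c₁ : ℝ) (hc₁ : 0 < c₁)
    (hremez : ∀ (q : ℂ → ℝ) (r s : ℝ), IsGenPoly q r → 0 < s →
      μH[1] {z ∈ Γ | 1 < q z} ≤ ENNReal.ofReal s → s < Metric.diam Γ / 2 →
      ∀ z ∈ Γ, q z ≤ Real.exp (c₁ * δfun s * r)) :
    ∃ c₂ > (0:ℝ), ∀ (p : ℝ) (q : ℂ → ℝ) (r s : ℝ) (A : Set ℂ),
      1 ≤ p → IsGenPoly q r →
      0 < s → s < Metric.diam Γ / 4 →
      MeasurableSet A → A ⊆ Γ → μH[1] Γ ≤ μH[1] A + ENNReal.ofReal s →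
      ∫ z in Γ, q z ^ p ∂μH[1] ≤
        (1 + Real.exp (c₂ * δfun s * p * r)) * ∫ z in A, q z ^ p ∂μH[1] := by
  obtain ⟨c₂, hc₂, h⟩ := genpoly_remez_Lp_general hΓJ.isCompact
    (hΓq.hausdorffMeasure_lt_top hΓJ).ne hΦ hδfun hc₁ hremez
  exact ⟨c₂, hc₂, fun p q r s A hp => h p q r s A (one_pos.trans_le hp)⟩
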